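/- Let X ~ N(0, Σ) and Y ~ N(0, S) be independent Gaussian vectors in ℝ^d with positive semidefinite covariance matrices Σ and S. Then for all 0 ≤ t < (‖S‖_op ‖Σ‖_op)^{-1/2}, log E[exp(t⟨X, Y⟩)] ≤ t² Tr(SΣ) / (2(1 - t√(‖S‖_op ‖Σ‖_op))). -/

import Mathlib

/-!
Integrating out `Y` first turns the Laplace transform into `E[exp (t² / 2 * ⟨X, S X⟩)]`. Writing
`X = R G` with `R = √Σ` and `G` standard Gaussian, this is the Laplace transform of
`⟨G, T G⟩` with `T = R S R`; in an eigenbasis of `T` it factors into one-dimensional Gaussian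
integrals, so that its logarithm is `-1/2 * ∑ log (1 - t² λᵢ)`, with `λᵢ` the eigenvalues of `T`.
Each `λᵢ` lies in `[0, ‖S‖ ‖Σ‖]`, and `∑ λᵢ = Tr (S Σ)`; hence `-log (1 - a) ≤ a / (1 - a)` gives
the bound with denominator `2 (1 - t² ‖S‖ ‖Σ‖)`.
-/

open MeasureTheory ProbabilityTheory

/-- Operator (spectral) norm of a real matrix acting on Euclidean space. -/
noncomputable def opNorm {d : ℕ} (A : Matrix (Fin d) (Fin d) ℝ) : ℝ :=
  ‖Matrix.toEuclideanCLM (𝕜 := ℝ) A‖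

/-- The quadratic form `u ↦ ⟨u, A u⟩` on Euclidean space. -/
noncomputable def quadForm {d : ℕ} (A : Matrix (Fin d) (Fin d) ℝ)
    (u : EuclideanSpace ℝ (Fin d)) : ℝ :=
  @inner ℝ _ _ u (Matrix.toEuclideanCLM (𝕜 := ℝ) A u)

/-- A measure on `ℝ^d` is Gaussian with mean `m` and covariance `S` if every
one-dimensional linear marginal is the corresponding real Gaussian. -/
def IsGaussianVec {d : ℕ} (μ : Measure (EuclideanSpace ℝ (Fin d)))
    (m : EuclideanSpace ℝ (Fin d)) (S : Matrix (Fin d) (Fin d) ℝ) : Prop :=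
  IsProbabilityMeasure μ ∧
    ∀ u : EuclideanSpace ℝ (Fin d),
      μ.map (fun x => @inner ℝ _ _ u x) =
        gaussianReal (@inner ℝ _ _ u m) (Real.toNNReal (quadForm S u))

open scoped RealInnerProductSpace NNReal ComplexOrder MatrixOrder

section RealInequalities

lemma neg_log_one_sub_le_div {a b : ℝ} (ha : 0 ≤ a) (hab : a ≤ b) (hb : b < 1) :
    -Real.log (1 - a) ≤ a / (1 - b) := by
  have ha1 : 0 < 1 - a := by linarith
  calc -Real.log (1 - a) ≤ (1 - a)⁻¹ - 1 := by
        linarith [Real.one_sub_inv_le_log_of_pos ha1]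
    _ = a / (1 - a) := by field_simp; ring
    _ ≤ a / (1 - b) := by gcongr

lemma mul_sqrt_lt_one_of_lt_rpow {k t : ℝ} (ht : t < k ^ (-(1 : ℝ) / 2)) : t * √k < 1 := by
  rcases le_or_gt k 0 with hk | hk
  · simp [Real.sqrt_eq_zero_of_nonpos hk]
  · rw [neg_div, Real.rpow_neg hk.le, ← Real.sqrt_eq_rpow] at ht
    exact (lt_inv_mul_iff₀' (Real.sqrt_pos.2 hk)).1 (by rwa [mul_one])

lemma sq_mul_le_mul_sqrt {k t : ℝ} (ht : 0 ≤ t) (htk : t * √k ≤ 1) : t ^ 2 * k ≤ t * √k :=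
  calc t ^ 2 * k ≤ t ^ 2 * √k ^ 2 := by
        gcongr
        exact (Real.sqrt_le_left (Real.sqrt_nonneg k)).1 le_rfl
    _ = (t * √k) ^ 2 := (mul_pow ..).symm
    _ ≤ t * √k := pow_le_of_le_one (by positivity) htk two_ne_zero

end RealInequalities

lemma integral_prod_of_nonneg {α β : Type*} [MeasurableSpace α] [MeasurableSpace β]
    {μ : Measure α} {ν : Measure β} [SFinite μ] [SFinite ν] {f : α × β → ℝ}
    (hf : AEStronglyMeasurable f (μ.prod ν)) (hf0 : ∀ p, 0 ≤ f p)
    (hfν : ∀ᵐ x ∂μ, Integrable (fun y ↦ f (x, y)) ν) :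
    ∫ p, f p ∂(μ.prod ν) = ∫ x, ∫ y, f (x, y) ∂ν ∂μ := by
  by_cases hfint : Integrable f (μ.prod ν)
  · exact integral_prod f hfint
  · have hfint' : ¬ Integrable (fun x ↦ ∫ y, f (x, y) ∂ν) μ := fun h ↦
      hfint <| (integrable_prod_iff hf).2
        ⟨hfν, by simpa only [Real.norm_of_nonneg (hf0 _)] using h⟩
    rw [integral_undef hfint, integral_undef hfint']

section StdGaussian

/- If `1 ≤ 2 * v * a`, the integrand is not integrable and both sides are zero. -/
lemma integral_exp_mul_sq_gaussianReal (v : ℝ≥0) (a : ℝ) :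
    ∫ x, Real.exp (a * x ^ 2) ∂(gaussianReal 0 v) = (√(1 - 2 * v * a))⁻¹ := by
  rcases eq_or_ne v 0 with rfl | hv
  · simp
  have hv' : (v : ℝ) ≠ 0 := by exact_mod_cast hv
  have hdensity (x : ℝ) : gaussianPDFReal 0 v x • Real.exp (a * x ^ 2) =
      (√(2 * Real.pi * v))⁻¹ * Real.exp (-((1 - 2 * v * a) / (2 * v)) * x ^ 2) := by
    rw [gaussianPDFReal, smul_eq_mul, mul_assoc, ← Real.exp_add]
    congr 2
    field_simp
    ring
  simp_rw [integral_gaussianReal_eq_integral_smul hv, hdensity]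
  rw [integral_const_mul, integral_gaussian, ← Real.sqrt_inv, ← Real.sqrt_inv,
    ← Real.sqrt_mul (by positivity)]
  congr 1
  field_simp

variable {E : Type*} [NormedAddCommGroup E] [InnerProductSpace ℝ E] [FiniteDimensional ℝ E]

lemma inner_map_sum_smul_eigenvectorBasis {T : E →ₗ[ℝ] E} (hT : T.IsSymmetric) {n : ℕ}
    (hn : Module.finrank ℝ E = n) (z : Fin n → ℝ) :
    ⟪∑ i, z i • hT.eigenvectorBasis hn i, T (∑ i, z i • hT.eigenvectorBasis hn i)⟫ =
      ∑ i, hT.eigenvalues hn i * z i ^ 2 := by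
  simp only [map_sum, map_smul, hT.apply_eigenvectorBasis, smul_smul]
  rw [(hT.eigenvectorBasis hn).orthonormal.inner_sum]
  refine Finset.sum_congr rfl fun i _ ↦ ?_
  simp only [conj_trivial, RCLike.ofReal_real_eq_id, id_eq]
  ring

lemma eigenvalues_le_opNorm {T : E →L[ℝ] E} (hT : (T : E →ₗ[ℝ] E).IsSymmetric) {n : ℕ}
    (hn : Module.finrank ℝ E = n) (i : Fin n) : hT.eigenvalues hn i ≤ ‖T‖ := by
  set v := hT.eigenvectorBasis hn i
  have hTv : T v = hT.eigenvalues hn i • v := hT.apply_eigenvectorBasis hn i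
  calc hT.eigenvalues hn i ≤ ‖T v‖ := by simpa [hTv, v, norm_smul] using le_abs_self _
    _ ≤ ‖T‖ := by simpa [v] using T.le_opNorm v

variable [MeasurableSpace E] [BorelSpace E]

lemma integral_exp_mul_inner_stdGaussian {T : E →ₗ[ℝ] E} (hT : T.IsSymmetric) {n : ℕ}
    (hn : Module.finrank ℝ E = n) (c : ℝ) :
    ∫ x, Real.exp (c * ⟪x, T x⟫) ∂(stdGaussian E) =
      ∏ i, (√(1 - 2 * (c * hT.eigenvalues hn i)))⁻¹ := by
  have hTc : Continuous T := T.continuous_of_finiteDimensional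
  rw [stdGaussian_eq_map_pi_orthonormalBasis (hT.eigenvectorBasis hn),
    integral_map (Measurable.aemeasurable (by fun_prop)) (by fun_prop)]
  simp_rw [inner_map_sum_smul_eigenvectorBasis hT hn, Finset.mul_sum, Real.exp_sum, ← mul_assoc]
  rw [integral_fintype_prod_eq_prod
    (f := fun i (s : ℝ) ↦ Real.exp (c * hT.eigenvalues hn i * s ^ 2))]
  simp_rw [integral_exp_mul_sq_gaussianReal, NNReal.coe_one, mul_one, mul_assoc]

lemma log_integral_exp_mul_inner_stdGaussian_le {T : E →L[ℝ] E} (hT : T.IsPositive) {c : ℝ}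
    (hc : 0 ≤ c) (hcT : 2 * c * ‖T‖ < 1) :
    Real.log (∫ x, Real.exp (c * ⟪x, T x⟫) ∂(stdGaussian E)) ≤
      c * (T : E →ₗ[ℝ] E).trace ℝ E / (1 - 2 * c * ‖T‖) := by
  have hsymm := hT.isSymmetric
  set eig := hsymm.eigenvalues rfl
  have heig_nonneg (i) : 0 ≤ 2 * (c * eig i) := by
    have := hT.toLinearMap.nonneg_eigenvalues rfl i
    positivity
  have heig_le (i) : 2 * (c * eig i) ≤ 2 * c * ‖T‖ := by
    rw [← mul_assoc]
    gcongr
    exact eigenvalues_le_opNorm hsymm rfl i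
  have hpos (i) : 0 < 1 - 2 * (c * eig i) := by linarith [heig_le i]
  calc Real.log (∫ x, Real.exp (c * ⟪x, T x⟫) ∂(stdGaussian E))
      = ∑ i, -Real.log (1 - 2 * (c * eig i)) / 2 := by
        simp_rw [← T.coe_coe, integral_exp_mul_inner_stdGaussian hsymm rfl]
        rw [Real.log_prod fun i _ ↦ (inv_pos.2 (Real.sqrt_pos.2 (hpos i))).ne']
        simp_rw [Real.log_inv, Real.log_sqrt (hpos _).le, neg_div]
    _ ≤ ∑ i, 2 * (c * eig i) / (1 - 2 * c * ‖T‖) / 2 := by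
        gcongr with i
        exact neg_log_one_sub_le_div (heig_nonneg i) (heig_le i) hcT
    _ = c * (T : E →ₗ[ℝ] E).trace ℝ E / (1 - 2 * c * ‖T‖) := by
        rw [hsymm.trace_eq_sum_eigenvalues rfl, RCLike.ofReal_real_eq_id, id_eq, Finset.mul_sum,
          Finset.sum_div]
        exact Finset.sum_congr rfl fun i _ ↦ by ring

open ContinuousLinearMap in
lemma log_integral_exp_mul_inner_map_stdGaussian_le {F : Type*} [NormedAddCommGroup F]
    [InnerProductSpace ℝ F] [FiniteDimensional ℝ F] [MeasurableSpace F] [BorelSpace F]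
    {A : F →L[ℝ] F} (hA : A.IsPositive) (R : E →L[ℝ] F) {c : ℝ} (hc : 0 ≤ c)
    (hcA : 2 * c * (‖A‖ * ‖R ∘L adjoint R‖) < 1) :
    Real.log (∫ x, Real.exp (c * ⟪x, A x⟫) ∂((stdGaussian E).map R)) ≤
      c * (A ∘L R ∘L adjoint R : F →ₗ[ℝ] F).trace ℝ F /
        (1 - 2 * c * (‖A‖ * ‖R ∘L adjoint R‖)) := by
  set T : E →L[ℝ] E := adjoint R ∘L A ∘L R
  have hT : T.IsPositive := hA.adjoint_conj R
  have htrace : (T : E →ₗ[ℝ] E).trace ℝ E =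
      (A ∘L R ∘L adjoint R : F →ₗ[ℝ] F).trace ℝ F :=
    LinearMap.trace_comp_comm' _ _
  have htrace_nonneg : 0 ≤ (T : E →ₗ[ℝ] E).trace ℝ E := hT.toLinearMap.trace_nonneg
  have hnorm : ‖T‖ ≤ ‖A‖ * ‖R ∘L adjoint R‖ :=
    calc ‖T‖ ≤ ‖adjoint R‖ * (‖A‖ * ‖R‖) :=
          (opNorm_comp_le _ _).trans (by gcongr; exact opNorm_comp_le _ _)
      _ = ‖A‖ * ‖R ∘L adjoint R‖ := by
          have h := norm_adjoint_comp_self (adjoint R)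
          rw [adjoint_adjoint, LinearIsometryEquiv.norm_map] at h
          rw [h, LinearIsometryEquiv.norm_map]
          ring
  have hinner (x : E) : ⟪R x, A (R x)⟫ = ⟪x, T x⟫ := (adjoint_inner_right R x _).symm
  rw [integral_map (by fun_prop) (by fun_prop)]
  simp_rw [hinner, ← htrace]
  have hcT : 2 * c * ‖T‖ ≤ 2 * c * (‖A‖ * ‖R ∘L adjoint R‖) := by gcongr
  exact (log_integral_exp_mul_inner_stdGaussian_le hT hc (hcT.trans_lt hcA)).trans
    (by gcongr)

end StdGaussian

section Matrix

lemma trace_mul_nonneg_of_posSemidef {n 𝕜 : Type*} [Fintype n] [RCLike 𝕜] {A B : Matrix n n 𝕜}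
    (hA : A.PosSemidef) (hB : B.PosSemidef) : 0 ≤ (A * B).trace := by
  classical
  obtain ⟨C, rfl⟩ := CStarAlgebra.nonneg_iff_eq_star_mul_self.1 hB.nonneg
  rw [Matrix.star_eq_conjTranspose, ← mul_assoc, Matrix.trace_mul_comm, ← mul_assoc]
  exact (hA.mul_mul_conjTranspose_same C).trace_nonneg

lemma isPositive_toEuclideanCLM {n 𝕜 : Type*} [Fintype n] [DecidableEq n] [RCLike 𝕜]
    {A : Matrix n n 𝕜} (hA : A.PosSemidef) : (Matrix.toEuclideanCLM (𝕜 := 𝕜) A).IsPositive :=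
  Matrix.isPositive_toEuclideanLin_iff.2 hA

lemma trace_toEuclideanCLM {n 𝕜 : Type*} [Fintype n] [DecidableEq n] [RCLike 𝕜]
    (A : Matrix n n 𝕜) :
    (Matrix.toEuclideanCLM (𝕜 := 𝕜) A : EuclideanSpace 𝕜 n →ₗ[𝕜] EuclideanSpace 𝕜 n).trace 𝕜 _ =
      A.trace :=
  A.trace_toLin_eq (PiLp.basisFun 2 𝕜 n)

end Matrix

section GaussianVector

variable {d : ℕ}

lemma quadForm_nonneg {A : Matrix (Fin d) (Fin d) ℝ} (hA : A.PosSemidef)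
    (u : EuclideanSpace ℝ (Fin d)) : 0 ≤ quadForm A u :=
  (isPositive_toEuclideanCLM hA).inner_nonneg_right u

lemma log_integral_exp_mul_quadForm_multivariateGaussian_le {A S : Matrix (Fin d) (Fin d) ℝ}
    (hA : A.PosSemidef) (hS : S.PosSemidef) {c : ℝ} (hc : 0 ≤ c)
    (hcS : 2 * c * (opNorm S * opNorm A) < 1) :
    Real.log (∫ x, Real.exp (c * quadForm S x) ∂(multivariateGaussian 0 A)) ≤
      c * (S * A).trace / (1 - 2 * c * (opNorm S * opNorm A)) := by
  set R := Matrix.toEuclideanCLM (𝕜 := ℝ) (CFC.sqrt A)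
  have hR : ContinuousLinearMap.adjoint R = R := ((CFC.sqrt_nonneg A).isSelfAdjoint.map _).star_eq
  have hRR : R ∘L ContinuousLinearMap.adjoint R = Matrix.toEuclideanCLM (𝕜 := ℝ) A := by
    rw [hR, ← ContinuousLinearMap.mul_def, ← map_mul, CFC.sqrt_mul_sqrt_self A hA.nonneg]
  have hmap : multivariateGaussian 0 A = (stdGaussian _).map R := by
    simp only [multivariateGaussian, zero_add, R]
  have hbound := log_integral_exp_mul_inner_map_stdGaussian_le (isPositive_toEuclideanCLM hS) R hc
    (by rwa [hRR])
  rwa [hRR, ← ContinuousLinearMap.mul_def, ← map_mul, trace_toEuclideanCLM, ← hmap] at hbound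

namespace IsGaussianVec

variable {ν : Measure (EuclideanSpace ℝ (Fin d))} {m : EuclideanSpace ℝ (Fin d)}
  {S : Matrix (Fin d) (Fin d) ℝ}

lemma eq_multivariateGaussian (hν : IsGaussianVec ν m S) (hS : S.PosSemidef) :
    ν = multivariateGaussian m S := by
  have := hν.1
  refine Measure.ext_of_charFun (funext fun u ↦ ?_)
  calc charFun ν u = charFun (ν.map (⟪u, ·⟫)) 1 := by
        rw [charFun_eq_charFunDual_toDualMap, charFunDual_eq_charFun_map_one]
        rfl
    _ = charFun (multivariateGaussian m S) u := by
        rw [hν.2 u, charFun_gaussianReal, charFun_multivariateGaussian hS,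
          Real.coe_toNNReal _ (quadForm_nonneg hS u), quadForm, Matrix.inner_toEuclideanCLM]
        simp

lemma mgf_inner (hν : IsGaussianVec ν m S) (hS : S.PosSemidef) (x : EuclideanSpace ℝ (Fin d))
    (t : ℝ) : mgf (⟪x, ·⟫) ν t = Real.exp (⟪x, m⟫ * t + quadForm S x * t ^ 2 / 2) := by
  rw [mgf_gaussianReal (hν.2 x), Real.coe_toNNReal _ (quadForm_nonneg hS x)]

lemma integral_exp_mul_inner_prod (hν : IsGaussianVec ν m S) (hS : S.PosSemidef)
    (μ : Measure (EuclideanSpace ℝ (Fin d))) [SFinite μ] (t : ℝ) :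
    ∫ p, Real.exp (t * ⟪p.1, p.2⟫) ∂(μ.prod ν) =
      ∫ x, Real.exp (⟪x, m⟫ * t + quadForm S x * t ^ 2 / 2) ∂μ := by
  have := hν.1
  have hfint (x : EuclideanSpace ℝ (Fin d)) : Integrable (fun y ↦ Real.exp (t * ⟪x, y⟫)) ν := by
    rw [← mgf_pos_iff, hν.mgf_inner hS]
    exact Real.exp_pos _
  rw [integral_prod_of_nonneg (by fun_prop) (fun _ ↦ (Real.exp_pos _).le) (.of_forall hfint)]
  exact integral_congr_ae (.of_forall fun x ↦ hν.mgf_inner hS x t)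

end IsGaussianVec

theorem stmt2_general {Ω : Type*} [MeasurableSpace Ω] {P : Measure Ω}
    {Sig S : Matrix (Fin d) (Fin d) ℝ} (hSig : Sig.PosSemidef) (hS : S.PosSemidef)
    {X Y : Ω → EuclideanSpace ℝ (Fin d)} (hXY : IndepFun X Y P)
    (hlawX : IsGaussianVec (P.map X) 0 Sig) (hlawY : IsGaussianVec (P.map Y) 0 S)
    {t : ℝ} (ht : t ^ 2 * (opNorm S * opNorm Sig) < 1) :
    Real.log (∫ ω, Real.exp (t * ⟪X ω, Y ω⟫) ∂P) ≤
      t ^ 2 * (S * Sig).trace / (2 * (1 - t ^ 2 * (opNorm S * opNorm Sig))) := by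
  have := hlawX.1
  have := hlawY.1
  have := P.isProbabilityMeasure_of_map X
  have hX : AEMeasurable X P := aemeasurable_of_map_neZero inferInstance
  have hY : AEMeasurable Y P := aemeasurable_of_map_neZero inferInstance
  have hlaw := (indepFun_iff_map_prod_eq_prod_map_map hX hY).1 hXY
  calc Real.log (∫ ω, Real.exp (t * ⟪X ω, Y ω⟫) ∂P)
      = Real.log (∫ p, Real.exp (t * ⟪p.1, p.2⟫) ∂((P.map X).prod (P.map Y))) := by
        rw [← hlaw, integral_map (hX.prodMk hY) (by fun_prop)]
    _ = Real.log (∫ x, Real.exp (t ^ 2 / 2 * quadForm S x) ∂(multivariateGaussian 0 Sig)) := by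
        rw [hlawY.integral_exp_mul_inner_prod hS, hlawX.eq_multivariateGaussian hSig]
        congr! 4
        rw [inner_zero_right]
        ring
    _ ≤ t ^ 2 / 2 * (S * Sig).trace / (1 - 2 * (t ^ 2 / 2) * (opNorm S * opNorm Sig)) :=
        log_integral_exp_mul_quadForm_multivariateGaussian_le hSig hS (by positivity)
          (by rwa [mul_div_cancel₀ _ two_ne_zero])
    _ = t ^ 2 * (S * Sig).trace / (2 * (1 - t ^ 2 * (opNorm S * opNorm Sig))) := by
        rw [mul_div_cancel₀ _ two_ne_zero, div_mul_eq_mul_div, div_div]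

end GaussianVector

/-- Laplace transform bound for the inner product of two independent centered
Gaussian vectors. -/
theorem stmt2 {d : ℕ} {Ω : Type*} [MeasurableSpace Ω] (P : Measure Ω)
    [IsProbabilityMeasure P]
    (Sig S : Matrix (Fin d) (Fin d) ℝ) (hSig : Sig.PosSemidef) (hS : S.PosSemidef)
    (X Y : Ω → EuclideanSpace ℝ (Fin d)) (hX : Measurable X) (hY : Measurable Y)
    (hXY : IndepFun X Y P)
    (hlawX : IsGaussianVec (P.map X) 0 Sig) (hlawY : IsGaussianVec (P.map Y) 0 S)
    (t : ℝ) (ht0 : 0 ≤ t) (ht : t < (opNorm S * opNorm Sig) ^ (-(1:ℝ)/2)) :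
    Real.log (∫ ω, Real.exp (t * @inner ℝ _ _ (X ω) (Y ω)) ∂P) ≤
      t ^ 2 * (S * Sig).trace / (2 * (1 - t * Real.sqrt (opNorm S * opNorm Sig))) := by
  have htrace := trace_mul_nonneg_of_posSemidef hS hSig
  have htk := mul_sqrt_lt_one_of_lt_rpow ht
  have hsq := sq_mul_le_mul_sqrt ht0 htk.le
  exact (stmt2_general hSig hS hXY hlawX hlawY (hsq.trans_lt htk)).trans (by gcongr)
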